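/- In the online Ramsey game with targets red C₄ and blue P₆, consider the position in which the five edges v₁v₂, v₂v₃, v₃v₄, v₄v₅, v₅v₆ of a path on six distinct vertices have been colored red, blue, blue, blue, red respectively (case B5). From this position Builder can force a red copy of C₄ or a blue copy of P₆ within at most 6 additional rounds, so within at most 11 rounds in total. -/

import Mathlib

open SimpleGraph

/-- The set `S` of edges of the infinite complete graph on `ℕ` contains a copy of
the graph `G`: there is an injective map of the vertices of `G` into `ℕ` sending
every edge of `G` into `S`. -/
def HasCopy {V : Type*} (G : SimpleGraph V) (S : Set (Sym2 ℕ)) : Prop :=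
  ∃ f : V → ℕ, Function.Injective f ∧ ∀ a b, G.Adj a b → s(f a, f b) ∈ S

/-- `BuilderWinsIn G H R B r` means: in the online Ramsey game with targets a red copy
of `G` and a blue copy of `H`, from the position in which the edges in `R` have been
colored red and the edges in `B` have been colored blue, Builder has a strategy that
guarantees, against every Painter strategy, that within at most `r` further rounds the
colored edges contain a red copy of `G` or a blue copy of `H`.  (In each round Builder
chooses a previously unchosen non-loop edge of the infinite complete graph on `ℕ`, and
Painter immediately colors it red or blue; so Builder wins within `r + 1` rounds iff he
has already won, or he can choose an edge such that whichever color Painter gives it,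
he can win within `r` further rounds.) -/
def BuilderWinsIn {V W : Type*} (G : SimpleGraph V) (H : SimpleGraph W) :
    Set (Sym2 ℕ) → Set (Sym2 ℕ) → ℕ → Prop
  | R, B, 0 => HasCopy G R ∨ HasCopy H B
  | R, B, (r + 1) => HasCopy G R ∨ HasCopy H B ∨
      ∃ e : Sym2 ℕ, ¬ e.IsDiag ∧ e ∉ R ∧ e ∉ B ∧
        BuilderWinsIn G H (insert e R) B r ∧ BuilderWinsIn G H R (insert e B) r

/-- The online size Ramsey number `ř(G, H)`: the least `t` such that, starting from the
empty position, Builder can force a red copy of `G` or a blue copy of `H` within at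
most `t` rounds. -/
noncomputable def onlineRamsey {V W : Type*} (G : SimpleGraph V) (H : SimpleGraph W) : ℕ :=
  sInf {t | BuilderWinsIn G H ∅ ∅ t}

/-!
Write the position as a red edge `ua`, a blue path from `a` to `b`, and a red edge `bw`.

A blue path whose ends have a common red neighbor `x` wins in two rounds: for a fresh vertex `y`,
the edges `ay` and `by` would each extend the blue path, and if both are red then `a x b y` is a
red `C₄`.  If only one end is joined to `x` by a red edge, one more round suffices.

Builder joins `b` and then `a` to a fresh vertex `x`.  As soon as one of these edges is blue, the
blue path has grown, its unchanged end carries a red edge, and the previous remark applies.  If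
both are red, then `u a x b w` is a red path, whose chords `ub` and `aw` would each close a red
`C₄`; so both become blue, and they extend the blue path at both of its ends.

This takes five rounds for a blue path of any positive length.
-/

section Game

variable {V W : Type*} {G : SimpleGraph V} {H : SimpleGraph W} {R B : Set (Sym2 ℕ)} {a b r : ℕ}

lemma BuilderWinsIn.of_hasCopy (h : HasCopy G R ∨ HasCopy H B) (r : ℕ) :
    BuilderWinsIn G H R B r := by
  cases r with
  | zero => exact h
  | succ r => exact h.imp_right Or.inl

lemma BuilderWinsIn.succ (h : BuilderWinsIn G H R B r) : BuilderWinsIn G H R B (r + 1) := by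
  induction r generalizing R B with
  | zero => exact .of_hasCopy h 1
  | succ r ih =>
    obtain hG | hH | ⟨e, he, heR, heB, hred, hblue⟩ := h
    · exact .of_hasCopy (.inl hG) _
    · exact .of_hasCopy (.inr hH) _
    · exact .inr (.inr ⟨e, he, heR, heB, ih hred, ih hblue⟩)

-- The edge need not be fresh: choosing an edge that is already colored only wastes a round.
lemma BuilderWinsIn.of_move (hab : a ≠ b) (hred : BuilderWinsIn G H (insert s(a, b) R) B r)
    (hblue : BuilderWinsIn G H R (insert s(a, b) B) r) : BuilderWinsIn G H R B (r + 1) := by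
  by_cases hR : s(a, b) ∈ R
  · rw [Set.insert_eq_of_mem hR] at hred
    exact hred.succ
  by_cases hB : s(a, b) ∈ B
  · rw [Set.insert_eq_of_mem hB] at hblue
    exact hblue.succ
  exact .inr (.inr ⟨s(a, b), Sym2.mk_isDiag_iff.not.2 hab, hR, hB, hred, hblue⟩)

lemma BuilderWinsIn.of_forced_blue (hab : a ≠ b) (hG : HasCopy G (insert s(a, b) R))
    (hblue : BuilderWinsIn G H R (insert s(a, b) B) r) : BuilderWinsIn G H R B (r + 1) :=
  .of_move hab (.of_hasCopy (.inl hG) r) hblue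

lemma BuilderWinsIn.of_forced_red (hab : a ≠ b) (hH : HasCopy H (insert s(a, b) B))
    (hred : BuilderWinsIn G H (insert s(a, b) R) B r) : BuilderWinsIn G H R B (r + 1) :=
  .of_move hab hred (.of_hasCopy (.inr hH) r)

end Game

section Copies

variable {S : Set (Sym2 ℕ)} {a b c d x : ℕ}

lemma hasCopy_iff_isContained {V : Type*} {G : SimpleGraph V} :
    HasCopy G S ↔ G ⊑ fromEdgeSet S := by
  constructor
  · rintro ⟨f, hf, hS⟩
    exact ⟨⟨⟨f, fun hadj => (fromEdgeSet_adj S).2 ⟨hS _ _ hadj, hf.ne hadj.ne⟩⟩, hf⟩⟩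
  · rintro ⟨f⟩
    exact ⟨f, f.injective, fun _ _ hadj => ((fromEdgeSet_adj S).1 (f.toHom.map_adj hadj)).1⟩

lemma hasCopy_cycleGraph {n : ℕ} {f : Fin (n + 2) → ℕ} (hf : Function.Injective f)
    (hS : ∀ i, s(f i, f (i + 1)) ∈ S) : HasCopy (cycleGraph (n + 2)) S := by
  refine ⟨f, hf, fun i j hij => ?_⟩
  obtain h | h := cycleGraph_adj.1 hij
  · rw [sub_eq_iff_eq_add'.1 h, Sym2.eq_swap]
    exact hS j
  · rw [sub_eq_iff_eq_add'.1 h]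
    exact hS i

lemma hasCopy_cycleGraph_four (hnodup : [a, b, c, d].Nodup) (hab : s(a, b) ∈ S)
    (hbc : s(b, c) ∈ S) (hcd : s(c, d) ∈ S) (hda : s(d, a) ∈ S) : HasCopy (cycleGraph 4) S :=
  hasCopy_cycleGraph (f := ![a, b, c, d])
    (List.nodup_ofFn.1 (by simpa [List.ofFn_succ] using hnodup))
    (by simp [Fin.forall_fin_succ, hab, hbc, hcd, hda])

variable {p : (fromEdgeSet S).Walk a b}

lemma exists_isPath_insert (hp : p.IsPath) (hx : x ∉ p.support) :
    ∃ q : (fromEdgeSet (insert s(b, x) S)).Walk a x,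
      q.IsPath ∧ q.length = p.length + 1 ∧ q.support = p.support.concat x := by
  have hle : fromEdgeSet S ≤ fromEdgeSet (insert s(b, x) S) :=
    fromEdgeSet_mono (Set.subset_insert _ _)
  have hadj : (fromEdgeSet (insert s(b, x) S)).Adj b x :=
    (fromEdgeSet_adj _).2 ⟨Set.mem_insert _ _, ne_of_mem_of_not_mem p.end_mem_support hx⟩
  exact ⟨(p.mapLe hle).concat hadj, (hp.mapLe hle).concat (by simpa using hx) hadj, by simp,
    by simp [Walk.support_concat]⟩

lemma hasCopy_pathGraph_insert (hp : p.IsPath) (hx : x ∉ p.support) :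
    HasCopy (pathGraph (p.length + 2)) (insert s(b, x) S) := by
  obtain ⟨q, hq, hlength, -⟩ := exists_isPath_insert hp hx
  have hcopy := hasCopy_iff_isContained.2 hq.isContained_pathGraph
  rwa [hlength] at hcopy

lemma hasCopy_pathGraph_insert_start (hp : p.IsPath) (hx : x ∉ p.support) :
    HasCopy (pathGraph (p.length + 2)) (insert s(a, x) S) := by
  have hcopy := hasCopy_pathGraph_insert hp.reverse (by simpa using hx)
  rwa [Walk.length_reverse] at hcopy

end Copies

section BluePath

variable {R B : Set (Sym2 ℕ)} {a b u w x : ℕ} {p : (fromEdgeSet B).Walk a b}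

lemma builderWinsIn_two_of_red_cherry (hp : p.IsPath) (hab : a ≠ b) (hx : x ∉ p.support)
    (hRax : s(a, x) ∈ R) (hRbx : s(b, x) ∈ R) :
    BuilderWinsIn (cycleGraph 4) (pathGraph (p.length + 2)) R B 2 := by
  obtain ⟨y, hy⟩ := Infinite.exists_notMem_finset (insert x p.support.toFinset)
  obtain ⟨hyx, hy⟩ : y ≠ x ∧ y ∉ p.support := by simpa using hy
  have hax : a ≠ x := ne_of_mem_of_not_mem p.start_mem_support hx
  have hbx : b ≠ x := ne_of_mem_of_not_mem p.end_mem_support hx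
  have hay : a ≠ y := ne_of_mem_of_not_mem p.start_mem_support hy
  have hby : b ≠ y := ne_of_mem_of_not_mem p.end_mem_support hy
  have hcycle : HasCopy (cycleGraph 4) (insert s(b, y) (insert s(a, y) R)) :=
    hasCopy_cycleGraph_four (a := a) (b := x) (c := b) (d := y) (by grind) (by simp [hRax])
      (by simp [Sym2.eq_swap, hRbx]) (by simp) (by simp [Sym2.eq_swap])
  exact .of_forced_red hay (hasCopy_pathGraph_insert_start hp hy) <| .of_forced_blue hby hcycle <|
    .of_hasCopy (.inr (hasCopy_pathGraph_insert hp hy)) 0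

lemma builderWinsIn_three_of_red_edge (hp : p.IsPath) (hab : a ≠ b) (hx : x ∉ p.support)
    (hRax : s(a, x) ∈ R) : BuilderWinsIn (cycleGraph 4) (pathGraph (p.length + 2)) R B 3 :=
  .of_forced_red (ne_of_mem_of_not_mem p.end_mem_support hx) (hasCopy_pathGraph_insert hp hx) <|
    builderWinsIn_two_of_red_cherry hp hab hx (Set.mem_insert_of_mem _ hRax) (Set.mem_insert _ _)

lemma builderWinsIn_three_of_blue_extension (hp : p.IsPath) (hx : x ∉ p.support)
    (hu : u ∉ p.support) (hux : u ≠ x) (hRau : s(a, u) ∈ R) :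
    BuilderWinsIn (cycleGraph 4) (pathGraph (p.length + 3)) R (insert s(b, x) B) 3 := by
  obtain ⟨q, hq, hlength, hsupport⟩ := exists_isPath_insert hp hx
  have hax : a ≠ x := ne_of_mem_of_not_mem p.start_mem_support hx
  have huq : u ∉ q.support := by simp [hsupport, hu, hux]
  have hwin := builderWinsIn_three_of_red_edge hq hax huq hRau
  rwa [hlength] at hwin

lemma builderWinsIn_two_of_red_path (hp : p.IsPath) (hab : a ≠ b) (hx : x ∉ p.support)
    (hu : u ∉ p.support) (hw : w ∉ p.support) (hux : u ≠ x) (hwx : w ≠ x) (huw : u ≠ w)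
    (hRau : s(a, u) ∈ R) (hRax : s(a, x) ∈ R) (hRbx : s(b, x) ∈ R) (hRbw : s(b, w) ∈ R) :
    BuilderWinsIn (cycleGraph 4) (pathGraph (p.length + 3)) R B 2 := by
  have hax : a ≠ x := ne_of_mem_of_not_mem p.start_mem_support hx
  have hbx : b ≠ x := ne_of_mem_of_not_mem p.end_mem_support hx
  have hau : a ≠ u := ne_of_mem_of_not_mem p.start_mem_support hu
  have hbu : b ≠ u := ne_of_mem_of_not_mem p.end_mem_support hu
  have haw : a ≠ w := ne_of_mem_of_not_mem p.start_mem_support hw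
  have hbw : b ≠ w := ne_of_mem_of_not_mem p.end_mem_support hw
  have hcycle_u : HasCopy (cycleGraph 4) (insert s(b, u) R) :=
    hasCopy_cycleGraph_four (a := u) (b := a) (c := x) (d := b) (by grind)
      (by simp [Sym2.eq_swap, hRau]) (by simp [hRax]) (by simp [Sym2.eq_swap, hRbx]) (by simp)
  have hcycle_w : HasCopy (cycleGraph 4) (insert s(a, w) R) :=
    hasCopy_cycleGraph_four (a := a) (b := x) (c := b) (d := w) (by grind)
      (by simp [hRax]) (by simp [Sym2.eq_swap, hRbx]) (by simp [hRbw]) (by simp [Sym2.eq_swap])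
  obtain ⟨q, hq, hlength, hsupport⟩ := exists_isPath_insert hp hu
  have hwq : w ∉ q.support := by simp [hsupport, hw, huw.symm]
  have hpath : HasCopy (pathGraph (p.length + 3)) (insert s(a, w) (insert s(b, u) B)) := by
    have hcopy := hasCopy_pathGraph_insert_start hq hwq
    rwa [hlength] at hcopy
  exact .of_forced_blue hbu hcycle_u <| .of_forced_blue haw hcycle_w <|
    .of_hasCopy (.inr hpath) 0

theorem builder_wins_case_B5_general (hp : p.IsPath) (hab : a ≠ b) (hu : u ∉ p.support)
    (hw : w ∉ p.support) (huw : u ≠ w) (hRau : s(a, u) ∈ R) (hRbw : s(b, w) ∈ R) :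
    BuilderWinsIn (cycleGraph 4) (pathGraph (p.length + 3)) R B 5 := by
  obtain ⟨x, hx⟩ := Infinite.exists_notMem_finset (insert u (insert w p.support.toFinset))
  obtain ⟨hxu, hxw, hx⟩ : x ≠ u ∧ x ≠ w ∧ x ∉ p.support := by simpa using hx
  refine .of_move (ne_of_mem_of_not_mem p.end_mem_support hx) ?bx_red
    (builderWinsIn_three_of_blue_extension hp hx hu hxu.symm hRau).succ
  refine .of_move (ne_of_mem_of_not_mem p.start_mem_support hx) ?ax_red ?ax_blue
  case ax_red =>
    exact (builderWinsIn_two_of_red_path hp hab hx hu hw hxu.symm hxw.symm huw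
      (by simp [hRau]) (by simp) (by simp) (by simp [hRbw])).succ
  case ax_blue =>
    have hwin := builderWinsIn_three_of_blue_extension hp.reverse (by simpa using hx)
      (by simpa using hw) hxw.symm (Set.mem_insert_of_mem s(b, x) hRbw)
    rwa [Walk.length_reverse] at hwin

end BluePath

/-- Case `B5`: in the online Ramsey game with targets red `C₄` and blue `P₆`,
from the position in which the five edges `v₁v₂, v₂v₃, v₃v₄, v₄v₅, v₅v₆` of a path on
six distinct vertices have been colored red, blue, blue, blue, red respectively,
Builder can force a red copy of `C₄` or a blue copy of `P₆` within at most 6 additional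
rounds (so within at most 11 rounds in total). -/
theorem builder_wins_case_B5 (v : Fin 6 → ℕ) (hv : Function.Injective v) :
    BuilderWinsIn (cycleGraph 4) (pathGraph 6)
      {s(v 0, v 1), s(v 4, v 5)}
      {s(v 1, v 2), s(v 2, v 3), s(v 3, v 4)} 6 := by
  let p : (fromEdgeSet {s(v 1, v 2), s(v 2, v 3), s(v 3, v 4)}).Walk (v 1) (v 4) :=
    .cons (v := v 2) (by simp [hv.eq_iff]) <| .cons (v := v 3) (by simp [hv.eq_iff]) <|
      .cons (by simp [hv.eq_iff]) .nil
  have hp : p.IsPath := by simp [p, hv.eq_iff]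
  exact (builder_wins_case_B5_general hp (hv.ne (by decide)) (u := v 0) (w := v 5)
    (by simp [p, hv.eq_iff]) (by simp [p, hv.eq_iff]) (hv.ne (by decide))
    (by simp [Sym2.eq_swap]) (by simp)).succ
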